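/- Under hypotheses (i) and (ii), define A := (1/n)·Σ_ν γ^ν·γ_ν (sum over ν ∈ Fin n). Then for all β, ν ∈ Fin n one has σ^{βν}·A = (1/4)·[γ^β, γ^ν]. -/

import Mathlib

/-!
Write `T μ s b = γ μ * σ s b + σ s b * γ μ`. By `hanti` and `hσ_anti` it is totally antisymmetric,
and by `hconst` we have `2 • (σ s b * γ μ) = T μ s b + g μ b • γ s - g μ s • γ b`.

Cyclic invariance of `T` then eliminates it from the difference `σ s b * γ μ - σ b μ * γ s`
(`two_mul_sub_cyclic`), and antisymmetry kills its trace against the symmetric inverse metric, so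
that `2 ∑ μ, σ b μ * γ_μ = (n - 1) γ b` (`two_smul_contraction`). Multiplying the cyclic identity
on the right by the lowered `γ_μ`, summing over `μ`, and commuting `γ s` past `σ b μ` gives
`σ s b * ∑ μ, γ μ * γ_μ = (n / 2) γ s * γ b - (1 / 2) g s b ∑ μ, γ μ * γ_μ`, whose part
antisymmetric in `s, b` is the claim.
-/

open Matrix BigOperators

/-- A right inverse of a symmetric array is symmetric: its transpose is a left inverse. -/
lemma inverse_symm {n : ℕ} {g ginv : Fin n → Fin n → ℂ}
    (hg_symm : ∀ μ ν, g μ ν = g ν μ)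
    (hg_inv : ∀ μ ν, ∑ κ, g μ κ * ginv κ ν = if μ = ν then (1 : ℂ) else 0) (μ ν : Fin n) :
    ginv μ ν = ginv ν μ := by
  have h1 : Matrix.of g * Matrix.of ginv = 1 := by
    ext i j
    simp [Matrix.mul_apply, Matrix.one_apply, hg_inv]
  have h2 : (Matrix.of g)ᵀ = Matrix.of g := by
    ext i j
    simp [hg_symm j i]
  have h3 : (Matrix.of ginv)ᵀ * Matrix.of g = 1 := by
    rw [← h2, ← Matrix.transpose_mul, h1, Matrix.transpose_one]
  have h4 : (Matrix.of ginv)ᵀ = Matrix.of ginv := left_inv_eq_right_inv h3 h1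
  simpa using congrArg (fun M => M ν μ) h4

/-- Raising the index of the lowered family recovers the original one. -/
lemma raise_lower {n : ℕ} {V : Type*} [AddCommGroup V] [Module ℂ V]
    {g ginv : Fin n → Fin n → ℂ}
    (hg_inv : ∀ μ ν, ∑ κ, g μ κ * ginv κ ν = if μ = ν then (1 : ℂ) else 0)
    (γ : Fin n → V) (s : Fin n) :
    ∑ μ, g s μ • (∑ ρ, ginv μ ρ • γ ρ) = γ s := by
  simp_rw [Finset.smul_sum, smul_smul]
  rw [Finset.sum_comm]
  simp_rw [← Finset.sum_smul, hg_inv]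
  simp

section Ring

variable {n : ℕ} {R : Type*} [Ring R] [Algebra ℂ R] {g ginv : Fin n → Fin n → ℂ}
  {γ : Fin n → R} {σ : Fin n → Fin n → R}

/-- The anticommutators of `γ μ` with `σ s b` and of `γ s` with `σ b μ` agree, so the difference
of the ordered products is governed by the commutators alone. -/
lemma two_mul_sub_cyclic
    (hσ_anti : ∀ α β, σ α β = - σ β α)
    (hconst : ∀ μ s b, σ s b * γ μ - γ μ * σ s b = g μ b • γ s - g μ s • γ b)
    (hanti : ∀ μ s b, (γ μ * σ s b + σ s b * γ μ) + (γ s * σ μ b + σ μ b * γ s) = 0)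
    (μ s b : Fin n) :
    (2 : ℂ) • (σ s b * γ μ - σ b μ * γ s) =
      (g μ b • γ s - g μ s • γ b) - (g s μ • γ b - g s b • γ μ) := by
  rw [← hconst μ s b, ← hconst s b μ, two_smul]
  have h := hanti μ s b
  rw [hσ_anti μ b] at h
  have h' : γ μ * σ s b + σ s b * γ μ = γ s * σ b μ + σ b μ * γ s := by
    rw [← sub_eq_zero, ← h]
    noncomm_ring
  have h'' : σ s b * γ μ - σ b μ * γ s = γ s * σ b μ - γ μ * σ s b := by
    rw [sub_eq_sub_iff_add_eq_add, add_comm, h']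
  nth_rewrite 2 [h'']
  abel

/-- The trace of the totally antisymmetric anticommutator vanishes, which evaluates the
contraction of `σ b μ` with the lowered family. -/
lemma two_smul_contraction
    (hg_symm : ∀ μ ν, g μ ν = g ν μ)
    (hg_inv : ∀ μ ν, ∑ κ, g μ κ * ginv κ ν = if μ = ν then (1 : ℂ) else 0)
    (hσ_anti : ∀ α β, σ α β = - σ β α)
    (hconst : ∀ μ s b, σ s b * γ μ - γ μ * σ s b = g μ b • γ s - g μ s • γ b)
    (hanti : ∀ μ s b, (γ μ * σ s b + σ s b * γ μ) + (γ s * σ μ b + σ μ b * γ s) = 0)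
    (b : Fin n) :
    (2 : ℂ) • ∑ μ, σ b μ * (∑ ρ, ginv μ ρ • γ ρ) = ((n : ℂ) - 1) • γ b := by
  have hsymm := inverse_symm hg_symm hg_inv
  have hT : ∀ μ ρ, γ ρ * σ b μ + σ b μ * γ ρ = -(γ μ * σ b ρ + σ b ρ * γ μ) := by
    intro μ ρ
    have h := hanti ρ μ b
    rw [hσ_anti μ b, hσ_anti ρ b] at h
    rw [← sub_eq_zero, ← neg_eq_zero, ← h]
    noncomm_ring
  have htrace : ∑ μ, ∑ ρ, ginv μ ρ • (γ ρ * σ b μ + σ b μ * γ ρ) = 0 := by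
    have hself : ∀ x : R, x = -x → x = 0 := fun x hx => by
      have h2 : (2 : ℂ) • x = 0 := by
        rw [two_smul]
        nth_rewrite 1 [hx]
        exact neg_add_cancel x
      simpa using h2
    apply hself
    conv_lhs => rw [Finset.sum_comm]
    rw [← Finset.sum_neg_distrib]
    refine Finset.sum_congr rfl fun μ _ => ?_
    rw [← Finset.sum_neg_distrib]
    refine Finset.sum_congr rfl fun ρ _ => ?_
    rw [hsymm ρ μ, ← smul_neg, ← hT ρ μ]
  have hsplit : (2 : ℂ) • ∑ μ, σ b μ * (∑ ρ, ginv μ ρ • γ ρ) =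
      ∑ μ, ∑ ρ, ginv μ ρ • (γ ρ * σ b μ + σ b μ * γ ρ) +
        ∑ μ, ∑ ρ, ginv μ ρ • (g ρ μ • γ b - g ρ b • γ μ) := by
    rw [← Finset.sum_add_distrib, Finset.smul_sum]
    refine Finset.sum_congr rfl fun μ _ => ?_
    rw [← Finset.sum_add_distrib, Finset.mul_sum, Finset.smul_sum]
    refine Finset.sum_congr rfl fun ρ _ => ?_
    rw [← hconst ρ b μ, ← smul_add, mul_smul_comm, smul_comm, two_smul]
    congr 1
    abel
  have hdiag : ∑ μ, ∑ ρ, ginv μ ρ • g ρ μ • γ b = (n : ℂ) • γ b := by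
    simp_rw [smul_smul, ← Finset.sum_smul]
    congr 1
    have : ∀ μ, ∑ ρ, ginv μ ρ * g ρ μ = 1 := fun μ => by
      have h := hg_inv μ μ
      rw [if_pos rfl] at h
      rw [← h]
      exact Finset.sum_congr rfl fun ρ _ => by rw [hsymm μ ρ, hg_symm ρ μ, mul_comm]
    simp [this]
  have hoff : ∑ μ, ∑ ρ, ginv μ ρ • g ρ b • γ μ = γ b := by
    rw [Finset.sum_comm]
    conv_rhs => rw [← raise_lower hg_inv γ b]
    refine Finset.sum_congr rfl fun ρ _ => ?_
    rw [Finset.smul_sum]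
    refine Finset.sum_congr rfl fun μ _ => ?_
    rw [smul_comm, hsymm μ ρ, hg_symm ρ b]
  rw [hsplit, htrace, zero_add]
  simp_rw [smul_sub, Finset.sum_sub_distrib]
  rw [hdiag, hoff, sub_smul, one_smul]

/-- The contracted cyclic identity, before antisymmetrization in `s, b`. -/
lemma two_smul_mul_trace
    (hg_symm : ∀ μ ν, g μ ν = g ν μ)
    (hg_inv : ∀ μ ν, ∑ κ, g μ κ * ginv κ ν = if μ = ν then (1 : ℂ) else 0)
    (hσ_anti : ∀ α β, σ α β = - σ β α)
    (hconst : ∀ μ s b, σ s b * γ μ - γ μ * σ s b = g μ b • γ s - g μ s • γ b)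
    (hanti : ∀ μ s b, (γ μ * σ s b + σ s b * γ μ) + (γ s * σ μ b + σ μ b * γ s) = 0)
    (s b : Fin n) :
    (2 : ℂ) • (σ s b * ∑ μ, γ μ * (∑ ρ, ginv μ ρ • γ ρ)) =
      (n : ℂ) • (γ s * γ b) - g s b • ∑ μ, γ μ * (∑ ρ, ginv μ ρ • γ ρ) := by
  have hr := raise_lower hg_inv γ
  have hS := congrArg (γ s * ·)
    (two_smul_contraction hg_symm hg_inv hσ_anti hconst hanti b)
  simp only [mul_smul_comm] at hS
  set L : Fin n → R := fun μ => ∑ ρ, ginv μ ρ • γ ρ with hL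
  change ∀ s, ∑ μ, g s μ • L μ = γ s at hr
  change (2 : ℂ) • (γ s * ∑ μ, σ b μ * L μ) = _ at hS
  change (2 : ℂ) • (σ s b * ∑ μ, γ μ * L μ) = _ - g s b • ∑ μ, γ μ * L μ
  have hr' : ∀ c d, ∑ μ, g c μ • (γ d * L μ) = γ d * γ c := fun c d => by
    rw [← hr c, Finset.mul_sum]
    simp only [mul_smul_comm]
  -- Each summand: the cyclic identity times `L μ`, with `γ s` commuted to the left of `σ b μ`.
  have hterm : ∀ μ, (2 : ℂ) • (σ s b * (γ μ * L μ)) =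
      (2 : ℂ) • (γ s * (σ b μ * L μ)) + g b μ • (γ s * L μ) - g s b • (γ μ * L μ) := by
    intro μ
    have h1 := congrArg (· * L μ) (two_mul_sub_cyclic hσ_anti hconst hanti μ s b)
    have h2 := congrArg (· * L μ) (hconst s b μ)
    simp only [sub_mul, smul_mul_assoc, mul_assoc, smul_sub] at h1 h2
    rw [hg_symm μ b, hg_symm μ s] at h1
    rw [sub_eq_iff_eq_add] at h1 h2
    rw [h1, h2]
    module
  rw [Finset.mul_sum, Finset.smul_sum, Finset.sum_congr rfl fun μ _ => hterm μ,
    Finset.sum_sub_distrib, Finset.sum_add_distrib, hr' b s, ← Finset.smul_sum,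
    ← Finset.smul_sum, ← Finset.mul_sum, hS]
  module

end Ring

theorem stmt_6
    (n N : ℕ) (hn : 1 ≤ n) (hN : 1 ≤ N)
    (g ginv : Fin n → Fin n → ℂ)
    (hg_symm : ∀ μ ν, g μ ν = g ν μ)
    (hg_inv : ∀ μ ν, ∑ κ, g μ κ * ginv κ ν = if μ = ν then (1 : ℂ) else 0)
    (hg_inv' : ∀ μ ν, ∑ κ, ginv μ κ * g κ ν = if μ = ν then (1 : ℂ) else 0)
    (γ : Fin n → Matrix (Fin N) (Fin N) ℂ)
    (σ : Fin n → Fin n → Matrix (Fin N) (Fin N) ℂ)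
    (hσ_anti : ∀ α β, σ α β = - σ β α)
    (hconst : ∀ μ s b, σ s b * γ μ - γ μ * σ s b = g μ b • γ s - g μ s • γ b)
    (hanti : ∀ μ s b, (γ μ * σ s b + σ s b * γ μ) + (γ s * σ μ b + σ μ b * γ s) = 0)
    (A : Matrix (Fin N) (Fin N) ℂ)
    (hA : A = ((1 : ℂ) / n) • ∑ ν, γ ν * (∑ ρ, ginv ν ρ • γ ρ)) :
    ∀ β ν : Fin n,
      σ β ν * A = ((1 : ℂ) / 4) • (γ β * γ ν - γ ν * γ β) := by
  intro β ν
  have hn0 : (n : ℂ) ≠ 0 := by exact_mod_cast Nat.one_le_iff_ne_zero.mp hn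
  have h1 := two_smul_mul_trace hg_symm hg_inv hσ_anti hconst hanti β ν
  have h2 := two_smul_mul_trace hg_symm hg_inv hσ_anti hconst hanti ν β
  rw [hσ_anti ν β, hg_symm ν β, neg_mul] at h2
  rw [hA, mul_smul_comm]
  set X := σ β ν * ∑ μ, γ μ * (∑ ρ, ginv μ ρ • γ ρ) with hX
  have h3 : (4 : ℂ) • X = (n : ℂ) • (γ β * γ ν - γ ν * γ β) := by
    linear_combination (norm := module) h1 - h2
  have h4 : γ β * γ ν - γ ν * γ β = ((n : ℂ)⁻¹ * 4) • X := by
    rw [mul_smul, h3, smul_smul, inv_mul_cancel₀ hn0, one_smul]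
  rw [h4, smul_smul]
  congr 1
  ring
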